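/- Let H and K be complex Hilbert spaces and T ∈ B(H,K). Then there exists a unique operator V ∈ B(H,K) such that |T*|^{1/2} ∘ V = T with range V ⊆ closure(range T), and |T|^{1/2} ∘ V* = T* with range V* ⊆ closure(range T*) (i.e., V and V* are the reduced solutions of the systems |T*|^{1/2}X = T and |T|^{1/2}Y = T*, respectively). Moreover V*V = |T|, VV* = |T*|, V ∘ |T|^β = |T*|^β ∘ V for every real β > 0, closure(range V) = closure(range T), and closure(range V*) = closure(range T*). -/

import Mathlib

/-- `|T|^α = (T*T)^{α/2}` defined via the continuous functional calculus. -/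
noncomputable def absPow {H K : Type*} [NormedAddCommGroup H] [InnerProductSpace ℂ H]
    [NormedAddCommGroup K] [InnerProductSpace ℂ K] [CompleteSpace H] [CompleteSpace K]
    (T : H →L[ℂ] K) (α : ℝ) : H →L[ℂ] H :=
  CFC.rpow ((ContinuousLinearMap.adjoint T).comp T) (α / 2)

/-!
Write `P = |T|^{1/2}` and `Q = |T*|^{1/2}`. Since `‖T x‖ = ‖P (P x)‖ ≤ ‖P‖ ‖P x‖`, Douglas' lemma
gives the reduced solution `D` of `P Y = T*`, and `V` has to be `D*`. The relation
`T (T* T) = (T T*) T` passes to the functional calculus as `T |T|^β = |T*|^β T`, so that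
`P (D Q) = T* Q = P T*`; as `P` is injective on the closure of its range, `D Q = T*`, that is,
`Q V = T`. The remaining identities follow in the same way, by cancelling `P` or `Q` on the left.
-/

open scoped InnerProduct

theorem exists_extension_topologicalClosure_range {𝕜 E F G : Type*} [NontriviallyNormedField 𝕜]
    [AddCommGroup E] [Module 𝕜 E] [NormedAddCommGroup F] [NormedSpace 𝕜 F]
    [NormedAddCommGroup G] [NormedSpace 𝕜 G] [CompleteSpace G] (B : E →ₗ[𝕜] F) (S : E →ₗ[𝕜] G)
    {c : ℝ} (h : ∀ x, ‖S x‖ ≤ c * ‖B x‖) :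
    ∃ W : B.range.topologicalClosure →L[𝕜] G, ∀ x, W ⟨B x, subset_closure ⟨x, rfl⟩⟩ = S x := by
  let e : E →ₗ[𝕜] B.range.topologicalClosure :=
    B.codRestrict _ fun x ↦ subset_closure ⟨x, rfl⟩
  have h_dense : DenseRange e :=
    (denseRange_inclusion_iff subset_closure).2 subset_rfl |>.comp
      B.surjective_rangeRestrict.denseRange (continuous_inclusion subset_closure)
  exact ⟨S.extendOfNorm e, fun x ↦ LinearMap.extendOfNorm_eq h_dense ⟨c, h⟩ x⟩

section ReducedSolution

variable {𝕜 E H K : Type*} [RCLike 𝕜]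
  [NormedAddCommGroup E] [InnerProductSpace 𝕜 E]
  [NormedAddCommGroup H] [InnerProductSpace 𝕜 H] [CompleteSpace H]
  [NormedAddCommGroup K] [InnerProductSpace 𝕜 K] [CompleteSpace K]

theorem closure_range_adjoint_eq_orthogonal_ker (A : H →L[𝕜] K) :
    closure (Set.range (A†)) = (A.kerᗮ : Submodule 𝕜 H) := by
  rw [A.orthogonal_ker, Submodule.topologicalClosure_coe, LinearMap.coe_range,
    ContinuousLinearMap.coe_coe]

theorem eq_of_mem_closure_range_adjoint {A : H →L[𝕜] K} {x y : H} (h : A x = A y)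
    (hx : x ∈ closure (Set.range (A†))) (hy : y ∈ closure (Set.range (A†))) : x = y := by
  rw [closure_range_adjoint_eq_orthogonal_ker, SetLike.mem_coe] at hx hy
  have h_ker : x - y ∈ A.ker := by simp [h]
  exact sub_eq_zero.1 (inner_self_eq_zero.1 (sub_mem hx hy _ h_ker))

/-- `D` is the reduced solution of the operator equation `A X = C`: the one whose range lies in
the closure of the range of `A*`. -/
structure IsReducedSolution (A : H →L[𝕜] K) (C : E →L[𝕜] K) (D : E →L[𝕜] H) : Prop where
  comp_eq : A ∘L D = C
  range_subset : Set.range D ⊆ closure (Set.range (A†))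

namespace IsReducedSolution

variable {A : H →L[𝕜] K} {C : E →L[𝕜] K} {D D' : E →L[𝕜] H}

theorem unique (hD : IsReducedSolution A C D) (hD' : IsReducedSolution A C D') : D = D' :=
  ContinuousLinearMap.ext fun x ↦
    eq_of_mem_closure_range_adjoint (DFunLike.congr_fun (hD.comp_eq.trans hD'.comp_eq.symm) x)
      (hD.range_subset ⟨x, rfl⟩) (hD'.range_subset ⟨x, rfl⟩)

theorem ker_eq (hD : IsReducedSolution A C D) : D.ker = C.ker := by
  ext x
  simp only [LinearMap.mem_ker, ContinuousLinearMap.coe_coe, ← hD.comp_eq,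
    ContinuousLinearMap.comp_apply]
  refine ⟨fun hx ↦ by rw [hx, map_zero], fun hx ↦ ?_⟩
  exact eq_of_mem_closure_range_adjoint (hx.trans (map_zero A).symm) (hD.range_subset ⟨x, rfl⟩)
    (subset_closure ⟨0, map_zero _⟩)

theorem closure_range_adjoint [CompleteSpace E] (hD : IsReducedSolution A C D) :
    closure (Set.range (D†)) = closure (Set.range (C†)) := by
  rw [closure_range_adjoint_eq_orthogonal_ker, closure_range_adjoint_eq_orthogonal_ker, hD.ker_eq]

end IsReducedSolution

theorem exists_isReducedSolution [CompleteSpace E] {A : H →L[𝕜] K} {C : E →L[𝕜] K} {c : ℝ}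
    (h : ∀ y, ‖(C†) y‖ ≤ c * ‖(A†) y‖) : ∃ D : E →L[𝕜] H, IsReducedSolution A C D := by
  obtain ⟨W, hW⟩ := exists_extension_topologicalClosure_range (A† : K →ₗ[𝕜] H) (C† : K →ₗ[𝕜] E) h
  refine ⟨(A†).range.topologicalClosure.subtypeL ∘L W†, ?_, ?_⟩
  · ext x
    refine ext_inner_right 𝕜 fun y ↦ ?_
    calc inner 𝕜 (A ((W†) x)) y
      _ = inner 𝕜 ((W†) x : H) ((A†) y) := (A.adjoint_inner_right _ y).symm
      _ = inner 𝕜 ((W†) x) ⟨(A†) y, subset_closure ⟨y, rfl⟩⟩ := rfl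
      _ = inner 𝕜 x ((C†) y) := (W.adjoint_inner_left _ x).trans (congrArg (inner 𝕜 x) (hW y))
      _ = inner 𝕜 (C x) y := C.adjoint_inner_right x y
  · rintro _ ⟨x, rfl⟩
    exact ((W†) x).2

end ReducedSolution

section FunctionalCalculus

theorem rpow_add_of_pos {A : Type*} [CStarAlgebra A] [PartialOrder A] [StarOrderedRing A] (a : A)
    {s t : ℝ} (hs : 0 < s) (ht : 0 < t) : a ^ (s + t) = a ^ s * a ^ t := by
  lift s to NNReal using hs.le
  lift t to NNReal using ht.le
  rw [NNReal.coe_pos] at hs ht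
  rw [← NNReal.coe_add, ← CFC.nnrpow_eq_rpow (add_pos hs ht), ← CFC.nnrpow_eq_rpow hs,
    ← CFC.nnrpow_eq_rpow ht, CFC.nnrpow_add hs ht]

variable {H K : Type*}
  [NormedAddCommGroup H] [InnerProductSpace ℂ H] [CompleteSpace H]
  [NormedAddCommGroup K] [InnerProductSpace ℂ K] [CompleteSpace K]
  {T : H →L[ℂ] K} {A : H →L[ℂ] H} {B : K →L[ℂ] K}

theorem comp_cfcHomSuperset_of_comp_eq {S : Set ℝ} [CompactSpace S] (hA : IsSelfAdjoint A)
    (hB : IsSelfAdjoint B) (hAS : spectrum ℝ A ⊆ S) (hBS : spectrum ℝ B ⊆ S)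
    (h : T ∘L A = B ∘L T) (f : C(S, ℝ)) :
    T ∘L cfcHomSuperset hA hAS f = cfcHomSuperset hB hBS f ∘L T := by
  induction f using ContinuousMap.induction_on_of_compact with
  | const r =>
    have h_const : ContinuousMap.const S r = algebraMap ℝ C(S, ℝ) r := rfl
    rw [h_const, AlgHomClass.commutes, AlgHomClass.commutes]
    ext x
    simp [Algebra.algebraMap_eq_smul_one]
  | id => rwa [cfcHomSuperset_id, cfcHomSuperset_id]
  | star_id =>
    rwa [map_star, map_star, cfcHomSuperset_id, cfcHomSuperset_id, hA.star_eq, hB.star_eq]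
  | add f g hf hg =>
    rw [map_add, map_add, ContinuousLinearMap.comp_add, ContinuousLinearMap.add_comp, hf, hg]
  | mul f g hf hg =>
    rw [map_mul, map_mul, ContinuousLinearMap.mul_def, ContinuousLinearMap.mul_def,
      ← ContinuousLinearMap.comp_assoc, hf, ContinuousLinearMap.comp_assoc, hg,
      ContinuousLinearMap.comp_assoc]
  | frequently f hf =>
    exact hf.mem_of_closed <| isClosed_eq
      (continuous_const.clm_comp (cfcHomSuperset_continuous hA hAS))
      ((cfcHomSuperset_continuous hB hBS).clm_comp continuous_const)

theorem comp_cfc_of_comp_eq (hA : IsSelfAdjoint A) (hB : IsSelfAdjoint B) (h : T ∘L A = B ∘L T)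
    {f : ℝ → ℝ} (hf : ContinuousOn f (spectrum ℝ A ∪ spectrum ℝ B)) :
    T ∘L cfc f A = cfc f B ∘L T := by
  have : CompactSpace ↥(spectrum ℝ A ∪ spectrum ℝ B) := isCompact_iff_compactSpace.1 <|
    (ContinuousFunctionalCalculus.isCompact_spectrum A).union
      (ContinuousFunctionalCalculus.isCompact_spectrum B)
  rw [cfc_apply f A hA (hf.mono Set.subset_union_left),
    cfc_apply f B hB (hf.mono Set.subset_union_right)]
  exact comp_cfcHomSuperset_of_comp_eq hA hB Set.subset_union_left Set.subset_union_right h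
    ⟨_, hf.domRestrict⟩

theorem comp_rpow_of_comp_eq (hA : 0 ≤ A) (hB : 0 ≤ B) (h : T ∘L A = B ∘L T) {s : ℝ}
    (hs : 0 ≤ s) : T ∘L (A ^ s) = (B ^ s) ∘L T := by
  rw [CFC.rpow_eq_cfc_real hA, CFC.rpow_eq_cfc_real hB]
  exact comp_cfc_of_comp_eq (.of_nonneg hA) (.of_nonneg hB) h
    (Real.continuous_rpow_const hs).continuousOn

theorem ker_le_ker_rpow (hA : 0 ≤ A) {s : ℝ} (hs : 0 < s) : A.ker ≤ (A ^ s).ker := by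
  intro x hx
  -- `A x = 0` says that `z ↦ z x` intertwines `0` and `A`, hence also `0 ^ s = 0` and `A ^ s`.
  have h_intertwine : ContinuousLinearMap.toSpanSingleton ℂ x ∘L 0 =
      A ∘L ContinuousLinearMap.toSpanSingleton ℂ x := by
    ext
    simpa using hx.symm
  have h_rpow := comp_rpow_of_comp_eq le_rfl hA h_intertwine hs.le
  rw [← CFC.rpow_eq_pow, CFC.zero_rpow hs.ne'] at h_rpow
  simpa using (DFunLike.congr_fun h_rpow 1).symm

theorem ker_rpow (hA : 0 ≤ A) {s : ℝ} (hs : 0 < s) : (A ^ s).ker = A.ker := by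
  refine le_antisymm ?_ (ker_le_ker_rpow hA hs)
  have h_inv : (A ^ s) ^ s⁻¹ = A := by
    rw [CFC.rpow_rpow_of_exponent_nonneg A s s⁻¹ hs.le (inv_nonneg.2 hs.le) hA,
      mul_inv_cancel₀ hs.ne', CFC.rpow_one A hA]
  simpa only [h_inv] using ker_le_ker_rpow (CFC.rpow_nonneg (a := A) (y := s)) (inv_pos.2 hs)

end FunctionalCalculus

section AbsPow

variable {H K : Type*}
  [NormedAddCommGroup H] [InnerProductSpace ℂ H] [CompleteSpace H]
  [NormedAddCommGroup K] [InnerProductSpace ℂ K] [CompleteSpace K]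
  (T : H →L[ℂ] K)

theorem adjoint_comp_self_nonneg : 0 ≤ T† ∘L T :=
  (ContinuousLinearMap.nonneg_iff_isPositive _).2 T.isPositive_adjoint_comp_self

@[simp]
theorem adjoint_absPow (α : ℝ) : (absPow T α)† = absPow T α :=
  (IsSelfAdjoint.of_nonneg CFC.rpow_nonneg).adjoint_eq

theorem absPow_two : absPow T 2 = T† ∘L T := by
  rw [absPow, div_self two_ne_zero, CFC.rpow_eq_pow, CFC.rpow_one _ (adjoint_comp_self_nonneg T)]

variable {α β : ℝ}

theorem absPow_add (hα : 0 < α) (hβ : 0 < β) :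
    absPow T (α + β) = absPow T α ∘L absPow T β := by
  rw [absPow, add_div]
  exact rpow_add_of_pos _ (half_pos hα) (half_pos hβ)

theorem comp_absPow (hβ : 0 ≤ β) : T ∘L absPow T β = absPow (T†) β ∘L T := by
  refine comp_rpow_of_comp_eq (adjoint_comp_self_nonneg T) (adjoint_comp_self_nonneg (T†)) ?_
    (div_nonneg hβ zero_le_two)
  rw [ContinuousLinearMap.adjoint_adjoint, ContinuousLinearMap.comp_assoc]

theorem closure_range_absPow (hα : 0 < α) :
    closure (Set.range (absPow T α)) = closure (Set.range (T†)) := by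
  have h_ker : (absPow T α).ker = T.ker :=
    (ker_rpow (adjoint_comp_self_nonneg T) (half_pos hα)).trans T.ker_adjoint_comp_self
  rw [← adjoint_absPow, closure_range_adjoint_eq_orthogonal_ker, h_ker,
    closure_range_adjoint_eq_orthogonal_ker]

theorem absPow_apply_mem (hα : 0 < α) (x : H) :
    absPow T α x ∈ closure (Set.range (T†)) :=
  closure_range_absPow T hα ▸ subset_closure ⟨x, rfl⟩

theorem eq_of_absPow_comp_eq {E : Type*} [NormedAddCommGroup E] [NormedSpace ℂ E]
    {X Y : E →L[ℂ] H} (hα : 0 < α) (h : absPow T α ∘L X = absPow T α ∘L Y)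
    (hX : ∀ x, X x ∈ closure (Set.range (T†))) (hY : ∀ x, Y x ∈ closure (Set.range (T†))) :
    X = Y := by
  rw [← closure_range_absPow T hα, ← adjoint_absPow] at hX hY
  exact ContinuousLinearMap.ext fun x ↦
    eq_of_mem_closure_range_adjoint (DFunLike.congr_fun h x) (hX x) (hY x)

theorem norm_absPow_one_apply (x : H) : ‖absPow T 1 x‖ = ‖T x‖ := by
  have h_gram : (absPow T 1)† ∘L absPow T 1 = T† ∘L T := by
    rw [adjoint_absPow, ← absPow_add T one_pos one_pos, one_add_one_eq_two, absPow_two]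
  rw [ContinuousLinearMap.apply_norm_eq_sqrt_inner_adjoint_left, h_gram,
    ← ContinuousLinearMap.apply_norm_eq_sqrt_inner_adjoint_left]

theorem absPow_half_comp_absPow_half : absPow T (1 / 2) ∘L absPow T (1 / 2) = absPow T 1 := by
  rw [← absPow_add T one_half_pos one_half_pos, add_halves]

theorem norm_apply_le_norm_absPow_half (x : H) :
    ‖T x‖ ≤ ‖absPow T (1 / 2)‖ * ‖absPow T (1 / 2) x‖ := by
  rw [← norm_absPow_one_apply, ← absPow_half_comp_absPow_half]
  exact (absPow T (1 / 2)).le_opNorm _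

end AbsPow

section HalfPolarFactor

variable {H K : Type*}
  [NormedAddCommGroup H] [InnerProductSpace ℂ H] [CompleteSpace H]
  [NormedAddCommGroup K] [InnerProductSpace ℂ K] [CompleteSpace K]
  {T V W : H →L[ℂ] K}

/-- `V` is the operator `V_T`: both `V` and `V*` are reduced solutions, of `|T*|^{1/2} X = T` and
of `|T|^{1/2} Y = T*`. In terms of the polar decomposition `T = U |T|`, it is `U |T|^{1/2}`. -/
structure IsHalfPolarFactor (T V : H →L[ℂ] K) : Prop where
  isReducedSolution : IsReducedSolution (absPow (T†) (1 / 2)) T V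
  isReducedSolution_adjoint : IsReducedSolution (absPow T (1 / 2)) (T†) (V†)

theorem isReducedSolution_absPow_iff {E : Type*} [NormedAddCommGroup E] [InnerProductSpace ℂ E]
    {α : ℝ} (hα : 0 < α) {C D : E →L[ℂ] H} :
    IsReducedSolution (absPow T α) C D ↔
      absPow T α ∘L D = C ∧ Set.range D ⊆ closure (Set.range (T†)) := by
  rw [← closure_range_absPow T hα, ← adjoint_absPow T α]
  exact ⟨fun h ↦ ⟨h.comp_eq, by simpa using h.range_subset⟩,
    fun h ↦ ⟨h.1, by simpa using h.2⟩⟩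

theorem isHalfPolarFactor_iff :
    IsHalfPolarFactor T V ↔
      absPow (T†) (1 / 2) ∘L V = T ∧ Set.range V ⊆ closure (Set.range T) ∧
        absPow T (1 / 2) ∘L V† = T† ∧ Set.range (V†) ⊆ closure (Set.range (T†)) := by
  have h_left := isReducedSolution_absPow_iff (T := T†) one_half_pos (C := T) (D := V)
  rw [ContinuousLinearMap.adjoint_adjoint] at h_left
  rw [← and_assoc, ← h_left, ← isReducedSolution_absPow_iff one_half_pos]
  exact ⟨fun h ↦ ⟨h.1, h.2⟩, fun h ↦ ⟨h.1, h.2⟩⟩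

theorem exists_isHalfPolarFactor (T : H →L[ℂ] K) : ∃ V : H →L[ℂ] K, IsHalfPolarFactor T V := by
  obtain ⟨D, hD⟩ : ∃ D, IsReducedSolution (absPow T (1 / 2)) (T†) D :=
    exists_isReducedSolution (c := ‖absPow T (1 / 2)‖) fun x ↦ by
      simpa only [adjoint_absPow, ContinuousLinearMap.adjoint_adjoint]
        using norm_apply_le_norm_absPow_half T x
  obtain ⟨h_comp, h_range⟩ := (isReducedSolution_absPow_iff one_half_pos).1 hD
  have h_intertwine : T† ∘L absPow (T†) (1 / 2) = absPow T (1 / 2) ∘L T† := by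
    simpa using comp_absPow (T†) one_half_pos.le
  have h_comp_adjoint : D ∘L absPow (T†) (1 / 2) = T† := by
    refine eq_of_absPow_comp_eq T one_half_pos ?_
      (fun y ↦ h_range ⟨_, rfl⟩) (fun y ↦ subset_closure ⟨y, rfl⟩)
    rw [← ContinuousLinearMap.comp_assoc, h_comp, h_intertwine]
  refine ⟨D†, isHalfPolarFactor_iff.2 ⟨?_, ?_, ?_, ?_⟩⟩
  · simpa using congr(($h_comp_adjoint)†)
  · simpa only [hD.closure_range_adjoint, ContinuousLinearMap.adjoint_adjoint] using
      subset_closure (s := Set.range (D†))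
  · rwa [ContinuousLinearMap.adjoint_adjoint]
  · rwa [ContinuousLinearMap.adjoint_adjoint]

namespace IsHalfPolarFactor

theorem adjoint (hV : IsHalfPolarFactor T V) : IsHalfPolarFactor (T†) (V†) where
  isReducedSolution := by
    simpa only [ContinuousLinearMap.adjoint_adjoint] using hV.isReducedSolution_adjoint
  isReducedSolution_adjoint := by
    simpa only [ContinuousLinearMap.adjoint_adjoint] using hV.isReducedSolution

theorem unique (hV : IsHalfPolarFactor T V) (hW : IsHalfPolarFactor T W) : V = W :=
  hV.isReducedSolution.unique hW.isReducedSolution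

theorem closure_range (hV : IsHalfPolarFactor T V) :
    closure (Set.range V) = closure (Set.range T) := by
  simpa only [ContinuousLinearMap.adjoint_adjoint] using
    hV.isReducedSolution_adjoint.closure_range_adjoint

theorem apply_mem (hV : IsHalfPolarFactor T V) (x : H) : V x ∈ closure (Set.range T) :=
  hV.closure_range ▸ subset_closure ⟨x, rfl⟩

theorem comp_absPow_half (hV : IsHalfPolarFactor T V) : V ∘L absPow T (1 / 2) = T := by
  simpa using congr(($hV.isReducedSolution_adjoint.comp_eq)†)

theorem comp_absPow (hV : IsHalfPolarFactor T V) {β : ℝ} (hβ : 0 < β) :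
    V ∘L absPow T β = absPow (T†) β ∘L V := by
  have h_comp : absPow (T†) (1 / 2) ∘L V = T := hV.isReducedSolution.comp_eq
  refine eq_of_absPow_comp_eq (T†) one_half_pos ?_
    (fun x ↦ by simpa using hV.apply_mem _) (fun x ↦ absPow_apply_mem (T†) hβ _)
  calc absPow (T†) (1 / 2) ∘L V ∘L absPow T β
    _ = T ∘L absPow T β := by rw [← ContinuousLinearMap.comp_assoc, h_comp]
    _ = absPow (T†) β ∘L absPow (T†) (1 / 2) ∘L V := by rw [_root_.comp_absPow T hβ.le, h_comp]
    _ = absPow (T†) (1 / 2) ∘L absPow (T†) β ∘L V := by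
      rw [← ContinuousLinearMap.comp_assoc, ← ContinuousLinearMap.comp_assoc,
        ← absPow_add _ hβ one_half_pos, ← absPow_add _ one_half_pos hβ, add_comm]

theorem adjoint_comp_self (hV : IsHalfPolarFactor T V) : V† ∘L V = absPow T 1 := by
  have h_conj : absPow T (1 / 2) ∘L (V† ∘L V) ∘L absPow T (1 / 2) =
      absPow T (1 / 2) ∘L absPow T 1 ∘L absPow T (1 / 2) := by
    calc absPow T (1 / 2) ∘L (V† ∘L V) ∘L absPow T (1 / 2)
      _ = (absPow T (1 / 2) ∘L V†) ∘L V ∘L absPow T (1 / 2) := rfl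
      _ = absPow T 2 := by
        rw [hV.isReducedSolution_adjoint.comp_eq, hV.comp_absPow_half, absPow_two]
      _ = absPow T (1 / 2) ∘L absPow T 1 ∘L absPow T (1 / 2) := by
        rw [← absPow_add T one_pos one_half_pos, ← absPow_add T one_half_pos (by norm_num)]
        norm_num
  have h_right : (V† ∘L V) ∘L absPow T (1 / 2) = absPow T 1 ∘L absPow T (1 / 2) :=
    eq_of_absPow_comp_eq T one_half_pos h_conj (fun _ ↦ hV.adjoint.apply_mem _)
      (fun _ ↦ absPow_apply_mem T one_pos _)
  refine eq_of_absPow_comp_eq T one_half_pos ?_ (fun _ ↦ hV.adjoint.apply_mem _)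
    (absPow_apply_mem T one_pos)
  simpa [ContinuousLinearMap.adjoint_comp] using congr(($h_right)†)

theorem self_comp_adjoint (hV : IsHalfPolarFactor T V) : V ∘L V† = absPow (T†) 1 := by
  simpa using hV.adjoint.adjoint_comp_self

end IsHalfPolarFactor

end HalfPolarFactor

/-- Hilbert-space case of Corollary 3.2: existence and uniqueness of the operator `V_T`
such that `V_T` and `V_T*` are the reduced solutions of `|T*|^{1/2} X = T` and
`|T|^{1/2} Y = T*`, together with its further properties. -/
theorem exists_unique_VT
    {H K : Type*} [NormedAddCommGroup H] [InnerProductSpace ℂ H] [CompleteSpace H]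
    [NormedAddCommGroup K] [InnerProductSpace ℂ K] [CompleteSpace K]
    (T : H →L[ℂ] K) :
    ∃ V : H →L[ℂ] K,
      ((absPow (ContinuousLinearMap.adjoint T) (1/2)).comp V = T ∧
        Set.range V ⊆ closure (Set.range T) ∧
        (absPow T (1/2)).comp (ContinuousLinearMap.adjoint V) = ContinuousLinearMap.adjoint T ∧
        Set.range (ContinuousLinearMap.adjoint V) ⊆
          closure (Set.range (ContinuousLinearMap.adjoint T))) ∧
      (∀ V' : H →L[ℂ] K,
        ((absPow (ContinuousLinearMap.adjoint T) (1/2)).comp V' = T ∧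
          Set.range V' ⊆ closure (Set.range T) ∧
          (absPow T (1/2)).comp (ContinuousLinearMap.adjoint V') = ContinuousLinearMap.adjoint T ∧
          Set.range (ContinuousLinearMap.adjoint V') ⊆
            closure (Set.range (ContinuousLinearMap.adjoint T))) → V' = V) ∧
      (ContinuousLinearMap.adjoint V).comp V = absPow T 1 ∧
      V.comp (ContinuousLinearMap.adjoint V) = absPow (ContinuousLinearMap.adjoint T) 1 ∧
      (∀ β : ℝ, 0 < β →
        V.comp (absPow T β) = (absPow (ContinuousLinearMap.adjoint T) β).comp V) ∧
      closure (Set.range V) = closure (Set.range T) ∧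
      closure (Set.range (ContinuousLinearMap.adjoint V)) =
        closure (Set.range (ContinuousLinearMap.adjoint T)) := by
  obtain ⟨V, hV⟩ := exists_isHalfPolarFactor T
  exact ⟨V, isHalfPolarFactor_iff.1 hV, fun V' hV' ↦ (isHalfPolarFactor_iff.2 hV').unique hV,
    hV.adjoint_comp_self, hV.self_comp_adjoint, fun β hβ ↦ hV.comp_absPow hβ,
    hV.closure_range, hV.adjoint.closure_range⟩
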